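/- arXiv:2503.04547 — 4 statements merged into one kernel-verified Lean document; each statement's English description precedes it below -/
import Mathlib

section
/- Suppose p = b+2 and ℓ = b+2 (= p). Then the trace of the linear endomorphism f ↦ ρ(g·f) of W equals (1/π_ℓ)·{ (ℓ−1)·e_ℓ(n_1−1,…,n_ℓ−1) + e_{ℓ−1}(n_1−1,…,n_ℓ−1) + (−1)^b }. -/
open Finset MvPolynomial

noncomputable section

/-- Value of the elementary symmetric polynomial `e_k` at the family `v` restricted to `A`. -/
def esymVal {α F : Type*} [DecidableEq α] [CommRing F] (A : Finset α) (k : ℕ) (v : α → F) : F :=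
  ∑ B ∈ A.powersetCard k, ∏ i ∈ B, v i

/-- Pochhammer symbol `(a)_k = a (a+1) ⋯ (a+k-1)`. -/
def poch (a : ℚ) (k : ℕ) : ℚ := ∏ i ∈ Finset.range k, (a + (i : ℚ))

variable {p : ℕ}

/-- The index in `Fin (∑ t, n t)` of the `i`-th element of the `j`-th consecutive block. -/
def emb (n : Fin p → ℕ) (j : Fin p) (i : Fin (n j)) : Fin (∑ t, n t) :=
  ⟨(∑ t ∈ Finset.univ.filter (fun t => t < j), n t) + i, by
    have hj : j ∉ Finset.univ.filter (fun t => t < j) := by simp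
    have h2 : ∑ t ∈ insert j (Finset.univ.filter (fun t => t < j)), n t ≤ ∑ t, n t :=
      Finset.sum_le_sum_of_subset (Finset.subset_univ _)
    rw [Finset.sum_insert hj] at h2
    have := i.isLt
    omega⟩

/-- The Young subgroup: permutations mapping each block onto itself. -/
def youngGroup (n : Fin p → ℕ) : Finset (Equiv.Perm (Fin (∑ t, n t))) :=
  Finset.univ.filter fun w => ∀ (j : Fin p) (i : Fin (n j)), ∃ i' : Fin (n j),
    w (emb n j i) = emb n j i'

/-- The action of a permutation of the variables on polynomials, as a linear map. -/
def permAct {σ : Type*} (w : Equiv.Perm σ) :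
    MvPolynomial σ ℚ →ₗ[ℚ] MvPolynomial σ ℚ :=
  (MvPolynomial.rename ⇑w).toLinearMap

/-- Averaging operator over the Young subgroup. -/
def rho (n : Fin p → ℕ) :
    MvPolynomial (Fin (∑ t, n t)) ℚ →ₗ[ℚ] MvPolynomial (Fin (∑ t, n t)) ℚ :=
  ((youngGroup n).card : ℚ)⁻¹ • ∑ h ∈ youngGroup n, permAct h

/-- The alternating (Vandermonde) polynomial in the variables `x_{t 0}, …, x_{t b}`. -/
def Delta {N b : ℕ} (t : Fin (b + 1) → Fin N) : MvPolynomial (Fin N) ℚ :=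
  ∏ q ∈ Finset.univ.filter (fun q : Fin (b + 1) × Fin (b + 1) => q.1 < q.2),
    (X (t q.1) - X (t q.2))

/-- The span of all `Δ(x_{i₁},…,x_{i_{b+1}})` with `i₁ < ⋯ < i_{b+1}`. -/
def hookSpan (N b : ℕ) : Submodule ℚ (MvPolynomial (Fin N) ℚ) :=
  Submodule.span ℚ {f | ∃ t : Fin (b + 1) → Fin N, StrictMono t ∧ f = Delta t}

/-- The first `ℓ` block labels. -/
def firstL (p ℓ : ℕ) : Finset (Fin p) := Finset.univ.filter fun i => (i : ℕ) < ℓ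


/-! ### Generic setup: a block map `blk` -/

def Bk {N q : ℕ} (blk : Fin N → Fin q) (i : Fin q) : Finset (Fin N) :=
  Finset.univ.filter fun x => blk x = i

/-- blockwise average -/
def avg {N q m : ℕ} (blk : Fin N → Fin q) (f : Fin N → Fin m → MvPolynomial (Fin N) ℚ) (i : Fin q) :
    Fin m → MvPolynomial (Fin N) ℚ :=
  (C ((Bk blk i).card : ℚ)⁻¹ : MvPolynomial (Fin N) ℚ) • ∑ x ∈ Bk blk i, f x

def rowX {N : ℕ} (m : ℕ) (x : Fin N) : Fin m → MvPolynomial (Fin N) ℚ := fun c => X x ^ (c : ℕ)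

def vdet {N m : ℕ} (t : Fin m → Fin N) : MvPolynomial (Fin N) ℚ :=
  Matrix.det (Matrix.of fun k => rowX m (t k))

def Fdet {N q m : ℕ} (blk : Fin N → Fin q) (s : Fin m → Fin q) : MvPolynomial (Fin N) ℚ :=
  Matrix.det (Matrix.of fun k => avg blk (rowX m) (s k))

def Yg {N q : ℕ} (blk : Fin N → Fin q) : Finset (Equiv.Perm (Fin N)) :=
  Finset.univ.filter fun w => ∀ x, blk (w x) = blk x

def Rho {N q : ℕ} (blk : Fin N → Fin q) :
    MvPolynomial (Fin N) ℚ →ₗ[ℚ] MvPolynomial (Fin N) ℚ :=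
  ((Yg blk).card : ℚ)⁻¹ • ∑ h ∈ Yg blk, permAct h

lemma det_avg {N q m : ℕ} (blk : Fin N → Fin q) (f : Fin N → Fin m → MvPolynomial (Fin N) ℚ)
    (s : Fin m → Fin q) :
    Matrix.det (Matrix.of fun k => avg blk f (s k)) =
      (∏ k, ((Bk blk (s k)).card : ℚ)⁻¹) •
        ∑ r ∈ Fintype.piFinset (fun k => Bk blk (s k)), Matrix.det (Matrix.of fun k => f (r k)) := by
  have h1 := (Matrix.detRowAlternating (n := Fin m) (R := MvPolynomial (Fin N) ℚ)).toMultilinearMap.map_smul_univ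
    (fun k => (C ((Bk blk (s k)).card : ℚ)⁻¹ : MvPolynomial (Fin N) ℚ))
    (fun k => ∑ x ∈ Bk blk (s k), f x)
  have h2 := (Matrix.detRowAlternating (n := Fin m) (R := MvPolynomial (Fin N) ℚ)).toMultilinearMap.map_sum_finset
    (fun _ x => f x) (fun k => Bk blk (s k))
  rw [h2] at h1
  rw [MvPolynomial.smul_eq_C_mul, map_prod]
  exact h1

lemma permAct_vdet {N m : ℕ} (w : Equiv.Perm (Fin N)) (t : Fin m → Fin N) :
    permAct w (vdet t) = vdet (w ∘ t) := by
  unfold permAct vdet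
  rw [AlgHom.toLinearMap_apply, AlgHom.map_det]
  congr 1
  ext1 i j
  simp [rowX]

lemma vdet_zero {N m : ℕ} (t : Fin m → Fin N) {k l : Fin m} (hkl : k ≠ l) (h : t k = t l) :
    vdet t = 0 := by
  unfold vdet
  apply Matrix.det_zero_of_row_eq hkl
  ext1 c
  simp [h]

lemma Fdet_zero {N q m : ℕ} (blk : Fin N → Fin q) (s : Fin m → Fin q) {k l : Fin m} (hkl : k ≠ l) (h : s k = s l) :
    Fdet blk s = 0 := by
  unfold Fdet
  apply Matrix.det_zero_of_row_eq hkl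
  ext1 c
  simp [h]

lemma vdet_perm {N m : ℕ} (t : Fin m → Fin N) (π : Equiv.Perm (Fin m)) :
    vdet (t ∘ π) = ((Equiv.Perm.sign π : ℤ) : MvPolynomial (Fin N) ℚ) * vdet t := by
  unfold vdet
  rw [← Matrix.det_permute]
  rfl

lemma Fdet_perm {N q m : ℕ} (blk : Fin N → Fin q) (s : Fin m → Fin q) (π : Equiv.Perm (Fin m)) :
    Fdet blk (s ∘ π) = ((Equiv.Perm.sign π : ℤ) : MvPolynomial (Fin N) ℚ) * Fdet blk s := by
  unfold Fdet
  rw [← Matrix.det_permute]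
  rfl

lemma Rho_permAct {N q : ℕ} (blk : Fin N → Fin q) (w : Equiv.Perm (Fin N)) (hw : w ∈ Yg blk)
    (f : MvPolynomial (Fin N) ℚ) : Rho blk (permAct w f) = Rho blk f := by
  unfold Rho
  simp only [LinearMap.smul_apply, LinearMap.sum_apply]
  congr 1
  simp only [Yg, Finset.mem_filter, Finset.mem_univ, true_and] at hw
  refine Finset.sum_bij' (fun h _ => h * w) (fun h _ => h * w⁻¹) ?_ ?_ ?_ ?_ ?_
  · intro h hh
    simp only [Yg, Finset.mem_filter, Finset.mem_univ, true_and] at hh ⊢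
    intro x
    simp [hh, hw]
  · intro h hh
    simp only [Yg, Finset.mem_filter, Finset.mem_univ, true_and] at hh ⊢
    intro x
    have := hw (w⁻¹ x)
    simp at this
    simp [hh, this]
  · intro h _; simp
  · intro h _; simp
  · intro h _
    simp [permAct, MvPolynomial.rename_rename, Equiv.Perm.coe_mul]

lemma Yg_card {N q : ℕ} (blk : Fin N → Fin q) : ((Yg blk).card : ℚ) ≠ 0 := by
  have : (1 : Equiv.Perm (Fin N)) ∈ Yg blk := by simp [Yg]
  have := Finset.card_pos.2 ⟨_, this⟩
  positivity

lemma permAct_Fdet {N q m : ℕ} (blk : Fin N → Fin q) (w : Equiv.Perm (Fin N)) (hw : w ∈ Yg blk)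
    (s : Fin m → Fin q) : permAct w (Fdet blk s) = Fdet blk s := by
  unfold permAct Fdet
  simp only [Yg, Finset.mem_filter, Finset.mem_univ, true_and] at hw
  rw [AlgHom.toLinearMap_apply, AlgHom.map_det]
  congr 1
  ext1 i j
  simp only [avg, rowX, AlgHom.mapMatrix_apply, Matrix.map_apply, Matrix.of_apply, Pi.smul_apply,
    Finset.sum_apply, smul_eq_mul, map_mul, map_sum, map_pow, MvPolynomial.rename_X, MvPolynomial.rename_C]
  congr 1
  refine Finset.sum_bij' (fun x _ => w x) (fun x _ => w⁻¹ x) ?_ ?_ ?_ ?_ ?_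
  · intro x hx
    simpa [Bk, hw] using hx
  · intro x hx
    have := hw (w⁻¹ x)
    simp at this
    simpa [Bk, ← this] using hx
  all_goals simp

lemma Rho_Fdet {N q m : ℕ} (blk : Fin N → Fin q) (s : Fin m → Fin q) :
    Rho blk (Fdet blk s) = Fdet blk s := by
  unfold Rho
  simp only [LinearMap.smul_apply, LinearMap.sum_apply]
  rw [Finset.sum_congr rfl (fun h hh => permAct_Fdet blk h hh s), Finset.sum_const,
    ← Nat.cast_smul_eq_nsmul ℚ, smul_smul, inv_mul_cancel₀ (Yg_card blk), one_smul]

lemma exists_Yg {N q m : ℕ} (blk : Fin N → Fin q) (z : Fin q → Fin N) (hz : ∀ i, blk (z i) = i)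
    (t u : Fin m → Fin N) (htu : blk ∘ t = blk ∘ u) (hinj : Function.Injective (blk ∘ t)) :
    ∃ h ∈ Yg blk, u = h ∘ t := by
  have key : ∀ r : Fin m → Fin N, blk ∘ t = blk ∘ r →
      ∃ T : Fin q → Fin N, (∀ i, blk (T i) = i) ∧ ∀ k, T (blk (t k)) = r k := by
    intro r hr
    refine ⟨Function.extend (blk ∘ t) r z, ?_, fun k => hinj.extend_apply r z k⟩
    intro i
    by_cases hi : ∃ k, (blk ∘ t) k = i
    · obtain ⟨k, rfl⟩ := hi
      rw [hinj.extend_apply]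
      exact (congrFun hr k).symm
    · rw [Function.extend_apply' _ _ _ hi, hz]
  obtain ⟨T, hT, hTt⟩ := key t rfl
  obtain ⟨U, hU, hUu⟩ := key u htu
  have hb : ∀ x, blk (Equiv.swap (T (blk x)) (U (blk x)) x) = blk x := by
    intro x
    rw [Equiv.swap_apply_def]
    split_ifs with h1 h2
    · exact hU _
    · exact hT _
    · rfl
  have hinv : Function.Involutive (fun x => Equiv.swap (T (blk x)) (U (blk x)) x) := by
    intro x
    simp only [hb]
    simp
  refine ⟨hinv.toPerm, by simpa [Yg] using hb, ?_⟩
  funext k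
  simp [hTt, hUu]

lemma Rho_vdet {N q m : ℕ} (blk : Fin N → Fin q) (z : Fin q → Fin N) (hz : ∀ i, blk (z i) = i)
    (t : Fin m → Fin N) : Rho blk (vdet t) = Fdet blk (blk ∘ t) := by
  by_cases hinj : Function.Injective (blk ∘ t)
  · rw [← Rho_Fdet]
    conv_rhs => rw [Fdet, det_avg, map_smul, map_sum]
    have : ∀ r ∈ Fintype.piFinset (fun k => Bk blk ((blk ∘ t) k)),
        Rho blk (Matrix.det (Matrix.of fun k => rowX m (r k))) = Rho blk (vdet t) := by
      intro r hr
      simp only [Fintype.mem_piFinset, Bk, Finset.mem_filter, Finset.mem_univ, true_and] at hr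
      obtain ⟨h, hh, hu⟩ := exists_Yg blk z hz t r (funext fun k => (hr k).symm) hinj
      rw [← Rho_permAct blk h hh (vdet t), permAct_vdet, ← hu]
      rfl
    rw [Finset.sum_congr rfl this, Finset.sum_const, ← Nat.cast_smul_eq_nsmul ℚ, smul_smul,
      Fintype.card_piFinset, Nat.cast_prod, ← Finset.prod_mul_distrib, Finset.prod_eq_one, one_smul]
    intro k _
    apply inv_mul_cancel₀
    have : 0 < (Bk blk ((blk ∘ t) k)).card := Finset.card_pos.2 ⟨t k, by simp [Bk]⟩
    positivity
  · have hni := hinj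
    simp only [Function.Injective, not_forall] at hinj
    obtain ⟨k, l, hkl, hne⟩ := hinj
    rw [Fdet_zero blk _ hne hkl]
    by_cases ht : Function.Injective t
    · have hsw : Equiv.swap (t k) (t l) ∈ Yg blk := by
        simp only [Yg, Finset.mem_filter, Finset.mem_univ, true_and]
        intro x
        simp only [Function.comp_apply] at hkl
        rw [Equiv.swap_apply_def]
        split_ifs with h1 h2
        · rw [h1, hkl]
        · rw [h2, hkl]
        · rfl
      have h1 := Rho_permAct blk _ hsw (vdet t)
      have h2 : (Equiv.swap (t k) (t l)) ∘ t = t ∘ Equiv.swap k l := by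
        funext x
        simp only [Function.comp_apply]
        exact (ht.swap_apply k l x)
      rw [permAct_vdet, h2, vdet_perm, Equiv.Perm.sign_swap hne] at h1
      simp only [Units.val_neg, Units.val_one, Int.cast_neg, Int.cast_one, neg_mul, one_mul, map_neg] at h1
      exact self_eq_neg.1 h1.symm
    · simp only [Function.Injective, not_forall] at ht
      obtain ⟨k, l, hkl, hne⟩ := ht
      rw [vdet_zero _ hne hkl, map_zero]

/-- transition matrix -/
def tM {N q : ℕ} (blk : Fin N → Fin q) (g : Equiv.Perm (Fin N)) : Matrix (Fin q) (Fin q) ℚ :=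
  Matrix.of fun i j => ((Bk blk i).card : ℚ)⁻¹ * (((Bk blk i).filter fun x => blk (g x) = j).card : ℚ)

def Vm {N q : ℕ} (m : ℕ) (blk : Fin N → Fin q) : Matrix (Fin q) (Fin m) (MvPolynomial (Fin N) ℚ) :=
  Matrix.of fun i => avg blk (rowX m) i

def cM {N q : ℕ} (blk : Fin N → Fin q) (g : Equiv.Perm (Fin N)) :
    Matrix (Fin q) (Fin q) (MvPolynomial (Fin N) ℚ) := (tM blk g).map C

lemma tM_mul_Vm {N q m : ℕ} (blk : Fin N → Fin q) (g : Equiv.Perm (Fin N)) (i : Fin q) :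
    avg blk (fun x => avg blk (rowX m) (blk (g x))) i = (cM blk g * Vm m blk) i := by
  ext1 c
  rw [Matrix.mul_apply]
  simp only [avg, cM, tM, Vm, Matrix.map_apply, Matrix.of_apply, Pi.smul_apply, Finset.sum_apply, smul_eq_mul, C_mul,
    mul_assoc]
  rw [← Finset.mul_sum]
  congr 1
  rw [← Finset.sum_fiberwise (Bk blk i) (fun x => blk (g x))]
  refine Finset.sum_congr rfl fun j _ => ?_
  rw [Finset.sum_congr rfl (g := fun _ => C ((Bk blk j).card : ℚ)⁻¹ * ∑ c_1 ∈ Bk blk j, rowX m c_1 c)]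
  · rw [Finset.sum_const, nsmul_eq_mul]; simp
  · intro x hx
    rw [(Finset.mem_filter.1 hx).2]

lemma T_Fdet {N q m : ℕ} (blk : Fin N → Fin q) (z : Fin q → Fin N) (hz : ∀ i, blk (z i) = i)
    (g : Equiv.Perm (Fin N)) (s : Fin m → Fin q) :
    Rho blk (permAct g (Fdet blk s)) =
      Matrix.det ((cM blk g * Vm m blk).submatrix s id) := by
  have h1 : (cM blk g * Vm m blk).submatrix s id =
      Matrix.of fun k => avg blk (fun x => avg blk (rowX m) (blk (g x))) (s k) := by
    ext1 i j
    rw [Matrix.submatrix_apply, Matrix.of_apply, tM_mul_Vm]; rfl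
  rw [h1, det_avg, Fdet, det_avg, map_smul, map_smul, map_sum, map_sum]
  congr 1
  refine Finset.sum_congr rfl fun r _ => ?_
  have := Rho_vdet blk z hz (g ∘ r)
  rw [← permAct_vdet] at this
  exact this

/-- signed minors -/
def Dt {N b : ℕ} (blk : Fin N → Fin (b + 2)) (j : Fin (b + 2)) : MvPolynomial (Fin N) ℚ :=
  (Vm (b + 2) blk).adjugate (Fin.last _) j

lemma Vm_castSucc {N b : ℕ} (blk : Fin N → Fin (b + 2)) (i : Fin (b+2)) (c : Fin (b+1)) :
   Vm (b + 2) blk i c.castSucc = Vm (b+1) blk i c := by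
  simp [Vm, avg, rowX]

lemma Dt_eq {N b : ℕ} (blk : Fin N → Fin (b + 2)) (j : Fin (b + 2)) :
    Dt blk j = (-1) ^ (j + (b + 1) : ℕ) * Fdet blk j.succAbove := by
  unfold Dt Fdet
  rw [Matrix.adjugate_fin_succ_eq_det_submatrix]
  simp only [Fin.val_last]
  congr 2
  ext1 i c
  simp only [Matrix.submatrix_apply, Fin.succAbove_last, Vm_castSucc]
  rfl

lemma T_Dt {N b : ℕ} (blk : Fin N → Fin (b + 2)) (z : Fin (b + 2) → Fin N) (hz : ∀ i, blk (z i) = i)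
    (g : Equiv.Perm (Fin N)) (j : Fin (b + 2)) :
    Rho blk (permAct g (Dt blk j)) = ∑ k, (tM blk g).adjugate k j • Dt blk k := by
  have hs : ((-1) ^ (j + (b + 1) : ℕ) : MvPolynomial (Fin N) ℚ) = C ((-1) ^ (j + (b + 1) : ℕ)) := by simp
  have h1 : Rho blk (permAct g (Dt blk j)) =
      (cM blk g * Vm (b + 2) blk).adjugate (Fin.last _) j := by
    rw [Dt_eq, Matrix.adjugate_fin_succ_eq_det_submatrix, hs, ← MvPolynomial.smul_eq_C_mul,
      map_smul, map_smul, T_Fdet blk z hz, MvPolynomial.smul_eq_C_mul, ← hs]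
    simp only [Fin.val_last]
    congr 2
    ext1 i c
    simp only [Matrix.submatrix_apply, Fin.succAbove_last, Matrix.mul_apply, Vm_castSucc, id]
  rw [h1, Matrix.adjugate_mul_distrib, Matrix.mul_apply]
  refine Finset.sum_congr rfl fun k _ => ?_
  have h2 := (C : ℚ →+* MvPolynomial (Fin N) ℚ).map_adjugate (tM blk g)
  have h3 : (cM blk g).adjugate k j = (C ((tM blk g).adjugate k j) : MvPolynomial (Fin N) ℚ) :=
    (congrFun (congrFun h2 k) j).symm
  rw [h3, MvPolynomial.smul_eq_C_mul, mul_comm]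
  rfl

lemma Bk_card {N q : ℕ} (blk : Fin N → Fin q) (z : Fin q → Fin N) (hz : ∀ i, blk (z i) = i) (i : Fin q) :
    ((Bk blk i).card : ℚ) ≠ 0 := by
  have : 0 < (Bk blk i).card := Finset.card_pos.2 ⟨z i, by simp [Bk, hz]⟩
  positivity

lemma sum_Dt {N b : ℕ} (blk : Fin N → Fin (b + 2)) (z : Fin (b + 2) → Fin N) (hz : ∀ i, blk (z i) = i) :
    ∑ j, Dt blk j = 0 := by
  have h := congrFun (congrFun (Matrix.adjugate_mul (Vm (b + 2) blk)) (Fin.last _)) 0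
  rw [Matrix.mul_apply, Matrix.smul_apply, Matrix.one_apply_ne (Fin.last_pos.ne'), smul_zero] at h
  rw [← h]
  refine Finset.sum_congr rfl fun j _ => ?_
  have : Vm (b + 2) blk j 0 = 1 := by
    simp only [Vm, avg, rowX, Matrix.of_apply, Pi.smul_apply, Finset.sum_apply]
    simp only [Fin.val_zero, pow_zero, Finset.sum_const, smul_eq_mul, nsmul_eq_mul, mul_one]
    rw [← map_natCast (C : ℚ →+* MvPolynomial (Fin N) ℚ), ← C_mul, inv_mul_cancel₀ (Bk_card blk z hz j), C_1]
  rw [this, mul_one]; rfl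

lemma Dt_indep {N b : ℕ} (blk : Fin N → Fin (b + 2)) (z : Fin (b + 2) → Fin N) (hz : ∀ i, blk (z i) = i)
    (c : Fin (b + 2) → ℚ) (hc : ∑ j, c j • Dt blk j = 0) (j k : Fin (b + 2)) : c j = c k := by
  by_cases hjk : j = k
  · rw [hjk]
  let s : Fin (b + 2) → ℚ := fun i => if i = k then (j : ℕ) else (i : ℕ)
  let d : Fin (b + 2) → ℚ := fun i => (Matrix.vandermonde s).adjugate (Fin.last _) i
  let ev : MvPolynomial (Fin N) ℚ →ₐ[ℚ] ℚ := aeval (fun x => s (blk x))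
  have hev : ∀ i, ev (Dt blk i) = d i := by
    intro i
    have h1 := congrFun (congrFun ((ev : MvPolynomial (Fin N) ℚ →+* ℚ).map_adjugate (Vm (b + 2) blk)) (Fin.last _)) i
    have h2 : (ev : MvPolynomial (Fin N) ℚ →+* ℚ).mapMatrix (Vm (b + 2) blk) = Matrix.vandermonde s := by
      ext i c
      simp only [Vm, avg, rowX, RingHom.mapMatrix_apply, Matrix.map_apply, Matrix.of_apply, Pi.smul_apply,
        Finset.sum_apply, smul_eq_mul, map_mul, map_sum, map_pow, Matrix.vandermonde_apply]
      rw [Finset.sum_congr rfl (g := fun _ => s i ^ (c : ℕ))]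
      · rw [Finset.sum_const, nsmul_eq_mul, ← mul_assoc]
        simp only [ev, RingHom.coe_coe, aeval_C, Algebra.algebraMap_self, RingHom.id_apply]
        rw [inv_mul_cancel₀ (Bk_card blk z hz i), one_mul]
      · intro x hx
        have := (Finset.mem_filter.1 hx).2
        simp [ev, this]
    rw [h2] at h1
    exact h1
  have hz1 : ∀ i, i ≠ j → i ≠ k → d i = 0 := by
    intro i hi1 hi2
    simp only [d]
    rw [Matrix.adjugate_apply]
    apply Matrix.det_zero_of_row_eq hjk
    rw [Matrix.updateRow_ne (Ne.symm hi1), Matrix.updateRow_ne (Ne.symm hi2)]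
    ext c
    simp [s]
  have hd : d k ≠ 0 := by
    simp only [d]
    rw [Matrix.adjugate_fin_succ_eq_det_submatrix]
    apply mul_ne_zero
    · simp
    · have : (Matrix.vandermonde s).submatrix k.succAbove (Fin.last (b+1)).succAbove
          = Matrix.vandermonde (s ∘ k.succAbove) := by
        ext i c
        simp [Matrix.vandermonde_apply]
      rw [this, Matrix.det_vandermonde_ne_zero_iff]
      intro x y hxy
      simp only [Function.comp_apply, s, Fin.succAbove_ne, if_false, Nat.cast_inj] at hxy
      exact Fin.succAbove_right_injective (Fin.ext hxy)
  have h1 : ∑ i, c i * d i = 0 := by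
    have := congrArg ev hc
    simpa [hev] using this
  have h2 : ∑ i, d i = 0 := by
    have := congrArg ev (sum_Dt blk z hz)
    simpa [hev] using this
  rw [Fintype.sum_eq_add j k hjk (by rintro x ⟨h, h'⟩; rw [hz1 x h h', mul_zero])] at h1
  rw [Fintype.sum_eq_add j k hjk (by rintro x ⟨h, h'⟩; rw [hz1 x h h'])] at h2
  have h3 : (c k - c j) * d k = 0 := by linear_combination h1 - c j * h2
  rcases mul_eq_zero.1 h3 with h | h
  · linarith
  · exact absurd h hd

lemma Delta_eq_vdet {N b : ℕ} : ∃ e : ℚ, e ≠ 0 ∧ ∀ t : Fin (b + 1) → Fin N, Delta t = e • vdet t := by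
  refine ⟨∏ _q ∈ Finset.univ.filter (fun q : Fin (b + 1) × Fin (b + 1) => q.1 < q.2), (-1 : ℚ), ?_, ?_⟩
  · simp
  · intro t
    have h : vdet t = ∏ q ∈ Finset.univ.filter (fun q : Fin (b + 1) × Fin (b + 1) => q.1 < q.2),
        (X (t q.2) - X (t q.1) : MvPolynomial (Fin N) ℚ) := by
      have h1 : vdet t = Matrix.det (Matrix.vandermonde fun k => (X (t k) : MvPolynomial (Fin N) ℚ)) := rfl
      rw [h1, Matrix.det_vandermonde, Finset.prod_filter, ← Finset.univ_product_univ, Finset.prod_product]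
      refine Finset.prod_congr rfl fun i _ => ?_
      rw [← Finset.prod_filter]
      refine Finset.prod_congr ?_ fun _ _ => rfl
      ext x; simp
    rw [h, MvPolynomial.smul_eq_C_mul, map_prod, ← Finset.prod_mul_distrib, Delta]
    refine Finset.prod_congr rfl fun q _ => ?_
    simp

lemma vdet_mem {N b : ℕ} (t : Fin (b + 1) → Fin N) : vdet t ∈ hookSpan N b := by
  by_cases ht : Function.Injective t
  · have hs : StrictMono (t ∘ Tuple.sort t) :=
      (Tuple.monotone_sort t).strictMono_of_injective (ht.comp (Tuple.sort t).injective)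
    have h1 : Delta (t ∘ Tuple.sort t) ∈ hookSpan N b := Submodule.subset_span ⟨_, hs, rfl⟩
    obtain ⟨e, he, hD⟩ := Delta_eq_vdet (N := N) (b := b)
    have h2 : vdet t = (((Equiv.Perm.sign (Tuple.sort t) : ℤ) : ℚ) * e⁻¹) • Delta (t ∘ Tuple.sort t) := by
      rw [hD, smul_smul, mul_assoc, inv_mul_cancel₀ he, mul_one, vdet_perm, MvPolynomial.smul_eq_C_mul,
        ← mul_assoc]
      rcases Int.units_eq_one_or (Equiv.Perm.sign (Tuple.sort t)) with h | h <;> simp [h]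
    rw [h2]
    exact Submodule.smul_mem _ _ h1
  · simp only [Function.Injective, not_forall] at ht
    obtain ⟨k, l, hkl, hne⟩ := ht
    rw [vdet_zero _ hne hkl]
    exact Submodule.zero_mem _

lemma hookSpan_eq (N b : ℕ) : hookSpan N b = Submodule.span ℚ (Set.range (vdet : (Fin (b + 1) → Fin N) → _)) := by
  apply le_antisymm
  · rw [hookSpan, Submodule.span_le]
    rintro f ⟨t, -, rfl⟩
    obtain ⟨e, he, hD⟩ := Delta_eq_vdet (N := N) (b := b)
    rw [hD]
    exact Submodule.smul_mem _ _ (Submodule.subset_span ⟨t, rfl⟩)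
  · rw [Submodule.span_le]
    rintro f ⟨t, rfl⟩
    exact vdet_mem t

lemma Fdet_mem {N q b : ℕ} (blk : Fin N → Fin q) (s : Fin (b + 1) → Fin q) :
    Fdet blk s ∈ hookSpan N b := by
  rw [Fdet, det_avg]
  exact Submodule.smul_mem _ _ (Submodule.sum_mem _ fun r _ => vdet_mem r)

lemma Dt_eq_smul {N b : ℕ} (blk : Fin N → Fin (b + 2)) (j : Fin (b + 2)) :
    Dt blk j = ((-1 : ℚ) ^ (j + (b + 1) : ℕ)) • Fdet blk j.succAbove := by
  rw [Dt_eq, MvPolynomial.smul_eq_C_mul]; simp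

lemma Dt_mem {N b : ℕ} (blk : Fin N → Fin (b + 2)) (j : Fin (b + 2)) :
    Dt blk j ∈ hookSpan N b := by
  rw [Dt_eq_smul]
  exact Submodule.smul_mem _ _ (Fdet_mem _ _)

lemma Fdet_span {N b : ℕ} (blk : Fin N → Fin (b + 2)) (s : Fin (b + 1) → Fin (b + 2)) :
    Fdet blk s ∈ Submodule.span ℚ (Set.range (Dt blk)) := by
  by_cases hs : Function.Injective s
  · have hns : ¬ Function.Surjective s := by
      intro h
      have := Fintype.card_le_of_surjective s h
      simp at this
    simp only [Function.Surjective, not_forall, not_exists] at hns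
    obtain ⟨k, hk⟩ := hns
    have : ∀ x, ∃ y, k.succAbove y = s x := fun x => Fin.exists_succAbove_eq (hk x)
    choose π hπ using this
    have hinj : Function.Injective π := by
      intro x y hxy
      apply hs
      rw [← hπ, ← hπ, hxy]
    have hbij : Function.Bijective π := Finite.injective_iff_bijective.1 hinj
    have h1 : s = k.succAbove ∘ (Equiv.ofBijective π hbij) := by
      funext x; simp [hπ]
    have h2 : Fdet blk s = (((Equiv.Perm.sign (Equiv.ofBijective π hbij) : ℤ) : ℚ) * (-1 : ℚ) ^ (k + (b + 1) : ℕ)) • Dt blk k := by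
      rw [Dt_eq_smul, smul_smul, mul_assoc, ← mul_pow]
      norm_num
      conv_lhs => rw [h1]
      rw [Fdet_perm, MvPolynomial.smul_eq_C_mul]
      simp
    rw [h2]
    exact Submodule.smul_mem _ _ (Submodule.subset_span ⟨k, rfl⟩)
  · simp only [Function.Injective, not_forall] at hs
    obtain ⟨k, l, hkl, hne⟩ := hs
    rw [Fdet_zero _ _ hne hkl]
    exact Submodule.zero_mem _

lemma tM_one {N q : ℕ} (blk : Fin N → Fin q) (z : Fin q → Fin N) (hz : ∀ i, blk (z i) = i)
    (g : Equiv.Perm (Fin N)) : (tM blk g).mulVec 1 = 1 := by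
  ext i
  simp only [Matrix.mulVec, dotProduct, tM, Matrix.of_apply, Pi.one_apply, mul_one]
  rw [← Finset.mul_sum, ← Nat.cast_sum, ← Finset.card_eq_sum_card_fiberwise (fun _ _ => Finset.mem_coe.2 (Finset.mem_univ _)),
    inv_mul_cancel₀ (Bk_card blk z hz i)]

lemma trace_main {N b : ℕ} (blk : Fin N → Fin (b + 2)) (z : Fin (b + 2) → Fin N) (hz : ∀ i, blk (z i) = i)
    (g : Equiv.Perm (Fin N))
    (hW : ∀ f ∈ hookSpan N b, ((Rho blk).comp (permAct g)) f ∈ hookSpan N b) :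
    LinearMap.trace ℚ (hookSpan N b) (((Rho blk).comp (permAct g)).restrict hW) =
      (tM blk g).adjugate.trace - (tM blk g).det := by
  have hfin : Module.Finite ℚ (hookSpan N b) := by
    rw [hookSpan_eq]
    exact Module.Finite.span_of_finite ℚ (Set.finite_range _)
  set T := ((Rho blk).comp (permAct g)).restrict hW with hT
  let D : Fin (b + 2) → hookSpan N b := fun j => ⟨Dt blk j, Dt_mem blk j⟩
  let φ : (Fin (b + 2) → ℚ) →ₗ[ℚ] hookSpan N b := Fintype.linearCombination ℚ D
  have hφ : ∀ c, ((φ c : hookSpan N b) : MvPolynomial (Fin N) ℚ) = ∑ j, c j • Dt blk j := by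
    intro c
    simp [φ, Fintype.linearCombination_apply, D]
  let A : (Fin (b + 2) → ℚ) →ₗ[ℚ] (Fin (b + 2) → ℚ) := Matrix.toLin' (tM blk g).adjugate
  have hTφ : ∀ c, T (φ c) = φ (A c) := by
    intro c
    apply Subtype.ext
    rw [hT, LinearMap.coe_restrict_apply, hφ, hφ, map_sum]
    simp only [map_smul, LinearMap.comp_apply, T_Dt blk z hz, A, Matrix.toLin'_apply, Matrix.mulVec, dotProduct,
      Finset.smul_sum, Finset.sum_smul, smul_smul]
    rw [Finset.sum_comm]
    simp only [mul_comm]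
  have hrange : LinearMap.range T ≤ LinearMap.range φ := by
    rintro _ ⟨⟨f, hf⟩, rfl⟩
    have hmem : Rho blk (permAct g f) ∈ Submodule.span ℚ (Set.range (Dt blk)) := by
      rw [hookSpan_eq] at hf
      induction hf using Submodule.span_induction with
      | mem x hx =>
        obtain ⟨t, rfl⟩ := hx
        rw [permAct_vdet, Rho_vdet blk z hz]
        exact Fdet_span _ _
      | zero => simp
      | add x y _ _ hx hy => rw [map_add, map_add]; exact Submodule.add_mem _ hx hy
      | smul a x _ hx => rw [map_smul, map_smul]; exact Submodule.smul_mem _ _ hx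
    rw [Submodule.mem_span_range_iff_exists_fun] at hmem
    obtain ⟨c, hc⟩ := hmem
    refine ⟨c, Subtype.ext ?_⟩
    rw [hφ, hc, hT, LinearMap.coe_restrict_apply]; rfl
  obtain ⟨ψ, hψ⟩ := Module.projective_lifting_property φ.rangeRestrict
    (T.codRestrict (LinearMap.range φ) (fun x => hrange ⟨x, rfl⟩)) φ.surjective_rangeRestrict
  have hTψ : T = φ ∘ₗ ψ := by
    ext1 x
    have := congrArg Subtype.val (LinearMap.congr_fun hψ x)
    exact this.symm
  have hA1 : A 1 = (tM blk g).det • (1 : Fin (b + 2) → ℚ) := by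
    simp only [A, Matrix.toLin'_apply]
    conv_lhs => rw [← tM_one blk z hz g]
    rw [Matrix.mulVec_mulVec, Matrix.adjugate_mul, Matrix.smul_mulVec, Matrix.one_mulVec]
  have hφ1 : φ 1 = 0 := by
    apply Subtype.ext
    rw [hφ]
    simpa using sum_Dt blk z hz
  let lam : (Fin (b + 2) → ℚ) →ₗ[ℚ] ℚ := (LinearMap.proj 0) ∘ₗ (ψ ∘ₗ φ - A)
  have hlam : ψ ∘ₗ φ = A + lam.smulRight 1 := by
    apply LinearMap.ext
    intro c
    have h0 : φ ((ψ ∘ₗ φ - A) c) = 0 := by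
      rw [LinearMap.sub_apply, map_sub, ← hTφ, hTψ]; simp
    have h1 : ∑ j, ((ψ ∘ₗ φ - A) c) j • Dt blk j = 0 := by
      rw [← hφ, h0]; rfl
    have h2 := Dt_indep blk z hz _ h1
    funext k
    have h3 := h2 k 0
    simp only [LinearMap.sub_apply, Pi.sub_apply] at h3
    simp only [lam, LinearMap.add_apply, Pi.add_apply, LinearMap.smulRight_apply, Pi.smul_apply, Pi.one_apply,
      smul_eq_mul, mul_one, LinearMap.comp_apply, LinearMap.proj_apply, LinearMap.sub_apply, Pi.sub_apply] at h3 ⊢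
    linarith
  have hl1 : lam 1 = - (tM blk g).det := by
    simp only [lam, LinearMap.comp_apply, LinearMap.sub_apply, hφ1, hA1]
    simp
  rw [hTψ, LinearMap.trace_comp_comm', hlam, map_add, LinearMap.trace_smulRight, hl1]
  simp only [A, Matrix.trace_toLin'_eq]
  ring

def cyc {m : ℕ} (a c : Fin (m + 2) → ℚ) : Matrix (Fin (m + 2)) (Fin (m + 2)) ℚ :=
  Matrix.of fun i j => (if j = i then a i else 0) + (if j = i + 1 then c i else 0)

lemma cyc_apply {m : ℕ} (a c : Fin (m + 2) → ℚ) (i j : Fin (m + 2)) :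
    cyc a c i j = (if (j : ℕ) = i then a i else 0) +
      (if (j : ℕ) = i + 1 ∨ (j : ℕ) = 0 ∧ (i : ℕ) = m + 1 then c i else 0) := by
  simp only [cyc, Matrix.of_apply, Fin.ext_iff]
  congr 1
  refine if_congr ?_ rfl rfl
  rw [Fin.val_add_one]
  have := i.isLt
  have := j.isLt
  split_ifs with h
  · have h' : (i : ℕ) = m + 1 := by rw [h]; rfl
    omega
  · have : (i : ℕ) ≠ m + 1 := fun h' => h (Fin.ext h')
    omega

lemma det_cyc {m : ℕ} (a c : Fin (m + 2) → ℚ) :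
    (cyc a c).det = ∏ i, a i + (-1) ^ (m + 1) * ∏ i, c i := by
  rw [Matrix.det_succ_column_zero, Fintype.sum_eq_add 0 (Fin.last _) (Fin.last_pos.ne)]
  · congr 1
    · rw [Matrix.det_of_isUpperTriangular, Fin.prod_univ_succ (fun i => a i)]
      · simp [cyc_apply]
      · intro i j hij
        have : (j : ℕ) < i := hij
        simp only [Matrix.submatrix_apply, cyc_apply, Fin.succAbove_zero, Fin.val_succ]
        rw [if_neg (by omega), if_neg (by omega), add_zero]
    · rw [Matrix.det_of_isLowerTriangular, Fin.prod_univ_castSucc (fun i => c i)]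
      · simp [cyc_apply]
        ring
      · intro i j hij
        have : (i : ℕ) < j := hij
        simp only [Matrix.submatrix_apply, cyc_apply, Fin.succAbove_last, Fin.val_succ, Fin.val_castSucc]
        rw [if_neg (by omega), if_neg (by omega), add_zero]
  · rintro x ⟨h1, h2⟩
    have h1' : (x : ℕ) ≠ 0 := fun h => h1 (Fin.ext h)
    have h2' : (x : ℕ) ≠ m + 1 := fun h => h2 (Fin.ext h)
    rw [cyc_apply, if_neg, if_neg]
    · simp
    · simp; omega
    · simpa using Ne.symm h1'

lemma adj_cyc {m : ℕ} (a c : Fin (m + 2) → ℚ) (j : Fin (m + 2)) :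
    (cyc a c).adjugate j j = ∏ i ∈ Finset.univ.erase j, a i := by
  have : (cyc a c).updateRow j (Pi.single j 1) = cyc (Function.update a j 1) (Function.update c j 0) := by
    ext i k
    by_cases h : i = j
    · subst h
      simp [cyc, Pi.single_apply]
    · simp [cyc, h]
  rw [Matrix.adjugate_apply, this, det_cyc]
  rw [Finset.prod_eq_zero (f := Function.update c j 0) (Finset.mem_univ j) (by simp), mul_zero, add_zero,
    ← Finset.mul_prod_erase _ _ (Finset.mem_univ j)]
  simp only [Function.update_self, one_mul]
  refine Finset.prod_congr rfl fun i hi => ?_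
  rw [Function.update_of_ne (Finset.ne_of_mem_erase hi)]

lemma tM_cyc {N b : ℕ} (blk : Fin N → Fin (b + 2)) (z : Fin (b + 2) → Fin N) (hz : ∀ i, blk (z i) = i)
    (g : Equiv.Perm (Fin N)) (hg : ∀ i, g (z i) = z (i + 1)) (hg' : ∀ x, (∀ i, x ≠ z i) → g x = x) :
    tM blk g = cyc (fun i => ((Bk blk i).card : ℚ)⁻¹ * ((Bk blk i).card - 1))
      (fun i => ((Bk blk i).card : ℚ)⁻¹) := by
  ext i j
  have hzi : z i ∈ Bk blk i := by simp [Bk, hz]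
  have h1 : (((Bk blk i).filter fun x => blk (g x) = j).card : ℚ) =
      (if j = i + 1 then 1 else 0) + (if j = i then ((Bk blk i).card - 1 : ℚ) else 0) := by
    rw [Finset.card_filter, Nat.cast_sum, ← Finset.add_sum_erase _ _ hzi, hg, hz]
    congr 1
    · simp [eq_comm]
    · rw [Finset.sum_congr rfl (g := fun _ => if j = i then (1 : ℚ) else 0)]
      · rw [Finset.sum_const, Finset.card_erase_of_mem hzi, nsmul_eq_mul,
          Nat.cast_sub (Finset.card_pos.2 ⟨_, hzi⟩)]
        simp
      · intro x hx
        rw [Finset.mem_erase] at hx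
        have hx2 : blk x = i := by simpa [Bk] using hx.2
        rw [hg', hx2]
        · simp [eq_comm]
        · rintro k rfl
          rw [hz] at hx2
          exact hx.1 (by rw [hx2])
  simp only [tM, cyc, Matrix.of_apply, h1]
  split_ifs <;> ring

lemma esym_pred {b : ℕ} (v : Fin (b + 2) → ℚ) :
    esymVal Finset.univ (b + 1) v = ∑ j, ∏ i ∈ Finset.univ.erase j, v i := by
  unfold esymVal
  symm
  refine Finset.sum_bij (fun j _ => Finset.univ.erase j) ?_ ?_ ?_ ?_
  · intro j _
    simp [Finset.mem_powersetCard]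
  · intro i _ j _ h
    by_contra hne
    have : i ∈ Finset.univ.erase j := by simp [hne]
    rw [← h] at this
    simp at this
  · intro B hB
    rw [Finset.mem_powersetCard] at hB
    have : Bᶜ.card = 1 := by
      rw [Finset.card_compl, hB.2]; simp
    obtain ⟨j, hj⟩ := Finset.card_eq_one.1 this
    refine ⟨j, Finset.mem_univ _, ?_⟩
    rw [← compl_compl B, hj]
    ext x; simp
  · intros; rfl

lemma esym_top {b : ℕ} (v : Fin (b + 2) → ℚ) :
    esymVal Finset.univ (b + 2) v = ∏ i, v i := by
  unfold esymVal
  have : (Finset.univ : Finset (Fin (b + 2))).powersetCard (b + 2) = {Finset.univ} := by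
    have := Finset.powersetCard_self (Finset.univ : Finset (Fin (b + 2)))
    simpa using this
  rw [this, Finset.sum_singleton]

lemma final_formula {b : ℕ} (n : Fin (b + 2) → ℚ) (hn : ∀ i, n i ≠ 0) :
    (cyc (fun i => (n i)⁻¹ * (n i - 1)) (fun i => (n i)⁻¹)).adjugate.trace -
      (cyc (fun i => (n i)⁻¹ * (n i - 1)) (fun i => (n i)⁻¹)).det =
    (∏ i, n i)⁻¹ * ((((b + 2 : ℕ) : ℚ) - 1) * esymVal Finset.univ (b + 2) (fun i => n i - 1)
      + esymVal Finset.univ (b + 1) (fun i => n i - 1) + (-1) ^ b) := by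
  rw [esym_top, esym_pred, det_cyc, Matrix.trace]
  simp only [Matrix.diag_apply, adj_cyc]
  have hP : (∏ i, n i) ≠ 0 := Finset.prod_ne_zero_iff.2 fun i _ => hn i
  have h1 : ∀ j, ∏ i ∈ Finset.univ.erase j, ((n i)⁻¹ * (n i - 1)) =
      (∏ i, n i)⁻¹ * (∏ i, (n i - 1) + ∏ i ∈ Finset.univ.erase j, (n i - 1)) := by
    intro j
    rw [Finset.prod_mul_distrib, ← Finset.mul_prod_erase _ (fun i => n i - 1) (Finset.mem_univ j),
      ← Finset.mul_prod_erase _ n (Finset.mem_univ j), Finset.prod_inv_distrib, mul_inv]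
    have := hn j
    field_simp
    ring
  simp only [h1]
  rw [← Finset.mul_sum, Finset.sum_add_distrib, Finset.sum_const, Finset.prod_mul_distrib, Finset.prod_inv_distrib]
  simp only [Finset.card_univ, Fintype.card_fin, nsmul_eq_mul]
  ring

lemma emb_eq (n : Fin p → ℕ) (j : Fin p) (i : Fin (n j)) :
    emb n j i = finSigmaFinEquiv ⟨j, i⟩ := by
  apply Fin.ext
  rw [finSigmaFinEquiv_apply]
  simp only [emb]
  congr 1
  symm
  refine Finset.sum_bij (fun k _ => Fin.castLE j.2.le k) ?_ ?_ ?_ ?_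
  · intro k _
    exact Finset.mem_filter.2 ⟨Finset.mem_univ _, k.2⟩
  · intro k _ l _ h
    simpa using h
  · intro k hk
    simp only [Finset.mem_filter, Finset.mem_univ, true_and] at hk
    exact ⟨⟨k, hk⟩, Finset.mem_univ _, rfl⟩
  · intros; rfl

def blkOf (n : Fin p → ℕ) (x : Fin (∑ t, n t)) : Fin p := (finSigmaFinEquiv.symm x).1

lemma blkOf_emb (n : Fin p → ℕ) (j : Fin p) (i : Fin (n j)) : blkOf n (emb n j i) = j := by
  rw [emb_eq, blkOf, Equiv.symm_apply_apply]

lemma exists_emb (n : Fin p → ℕ) (x : Fin (∑ t, n t)) : ∃ i : Fin (n (blkOf n x)), x = emb n (blkOf n x) i := by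
  refine ⟨(finSigmaFinEquiv.symm x).2, ?_⟩
  exact ((emb_eq n _ _).trans (Equiv.apply_symm_apply finSigmaFinEquiv x)).symm

lemma exists_emb' (n : Fin p → ℕ) (x : Fin (∑ t, n t)) (j : Fin p) (h : blkOf n x = j) :
    ∃ i : Fin (n j), x = emb n j i := by
  subst h
  exact exists_emb n x

lemma youngGroup_eq (n : Fin p → ℕ) : youngGroup n = Yg (blkOf n) := by
  ext w
  simp only [youngGroup, Yg, Finset.mem_filter, Finset.mem_univ, true_and]
  constructor
  · intro h x
    obtain ⟨i, hi⟩ := exists_emb n x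
    obtain ⟨i', hi'⟩ := h _ i
    rw [← hi] at hi'
    rw [hi', blkOf_emb]
  · intro h j i
    apply exists_emb'
    rw [h, blkOf_emb]

lemma rho_eq (n : Fin p → ℕ) : rho n = Rho (blkOf n) := by
  unfold rho Rho
  rw [youngGroup_eq]

lemma Bk_blkOf_card (n : Fin p → ℕ) (j : Fin p) : (Bk (blkOf n) j).card = n j := by
  have : Bk (blkOf n) j = Finset.univ.image (emb n j) := by
    ext x
    simp only [Bk, Finset.mem_filter, Finset.mem_univ, true_and, Finset.mem_image]
    constructor
    · intro h
      obtain ⟨i, hi⟩ := exists_emb' n x j h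
      exact ⟨i, hi.symm⟩
    · rintro ⟨i, rfl⟩
      exact blkOf_emb n j i
  rw [this, Finset.card_image_of_injective, Finset.card_univ, Fintype.card_fin]
  intro i i' h
  have := congrArg Fin.val h
  simp only [emb] at this
  exact Fin.ext (by omega)

theorem sphericalFunction_hook_p_eq_b_add_two_l_eq_p (p b ℓ : ℕ) (n : Fin p → ℕ) (hn : ∀ j, 0 < n j)
    (hp : p = b + 2) (hℓ2 : 2 ≤ ℓ) (hℓ : ℓ = b + 2)
    (g : Equiv.Perm (Fin (∑ t, n t)))
    (hg1 : ∀ j k : Fin p, (k : ℕ) = (j : ℕ) + 1 → (k : ℕ) < ℓ →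
      g (emb n j ⟨0, hn j⟩) = emb n k ⟨0, hn k⟩)
    (hg2 : ∀ j j' : Fin p, (j : ℕ) = ℓ - 1 → (j' : ℕ) = 0 →
      g (emb n j ⟨0, hn j⟩) = emb n j' ⟨0, hn j'⟩)
    (hg3 : ∀ a, (∀ j : Fin p, (j : ℕ) < ℓ → a ≠ emb n j ⟨0, hn j⟩) → g a = a)
    (hW : ∀ f ∈ hookSpan (∑ t, n t) b,
      ((rho n).comp (permAct g)) f ∈ hookSpan (∑ t, n t) b) :
    LinearMap.trace ℚ (hookSpan (∑ t, n t) b) (((rho n).comp (permAct g)).restrict hW)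
      = (∏ i ∈ firstL p ℓ, (n i : ℚ))⁻¹ *
        (((ℓ : ℚ) - 1) * esymVal (firstL p ℓ) ℓ (fun i => (n i : ℚ) - 1)
          + esymVal (firstL p ℓ) (ℓ - 1) (fun i => (n i : ℚ) - 1)
          + (-1 : ℚ) ^ b) := by
  subst hp
  subst hℓ
  have hfirst : firstL (b + 2) (b + 2) = Finset.univ := by
    ext i; simp [firstL]
  have hz : ∀ i, blkOf n (emb n i ⟨0, hn i⟩) = i := fun i => blkOf_emb n i _
  have hg : ∀ i : Fin (b + 2), g (emb n i ⟨0, hn i⟩) = emb n (i + 1) ⟨0, hn (i + 1)⟩ := by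
    intro i
    by_cases hi : i = Fin.last _
    · apply hg2
      · rw [hi]; simp
      · rw [hi]; simp
    · have : ((i + 1 : Fin (b + 2)) : ℕ) = i + 1 := by
        rw [Fin.val_add_one, if_neg hi]
      exact hg1 _ _ this (Fin.isLt _)
  have hg' : ∀ x, (∀ i, x ≠ emb n i ⟨0, hn i⟩) → g x = x := fun x hx => hg3 x fun j _ => hx j
  have hW' := hW
  rw [rho_eq] at hW'
  have h := trace_main (blkOf n) (fun i => emb n i ⟨0, hn i⟩) hz g hW'
  rw [tM_cyc (blkOf n) (fun i => emb n i ⟨0, hn i⟩) hz g hg hg'] at h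
  simp only [Bk_blkOf_card] at h
  rw [final_formula (fun i => (n i : ℚ)) (fun i => by have := hn i; positivity)] at h
  rw [hfirst, Nat.add_sub_assoc (by norm_num), ← h]
  congr 1
  apply LinearMap.ext
  intro f
  apply Subtype.ext
  rw [LinearMap.coe_restrict_apply, LinearMap.coe_restrict_apply, rho_eq]

end
end

section
/- Let F be a field, let q, r, s be integers with 0 ≤ q ≤ r ≤ s, and let y_1,…,y_r ∈ F be nonzero. Then (∏_{i=1}^{r} y_i) · Σ_{U ⊆ {1,…,s}, #U = q} ∏_{j ∈ U ∩ {1,…,r}} (1 + 1/y_j) = Σ_{k=0}^{min(q,r)} C(s−k, q−k) · e_{r−k}(y_1,…,y_r), where C(·,·) is the binomial coefficient. -/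
noncomputable section

/-- Lemma 5.6: a generalization of the generating function for elementary symmetric
polynomials. -/
theorem prod_mul_sum_powersetCard {F : Type*} [Field F] (q r s : ℕ)
    (hqr : q ≤ r) (hrs : r ≤ s) (y : ℕ → F) (hy : ∀ i ∈ Finset.Icc 1 r, y i ≠ 0) :
    (∏ i ∈ Finset.Icc 1 r, y i) *
        ∑ U ∈ (Finset.Icc 1 s).powersetCard q, ∏ j ∈ U ∩ Finset.Icc 1 r, (1 + (y j)⁻¹)
      = ∑ k ∈ Finset.range (min q r + 1),
          ((s - k).choose (q - k) : F) * esymVal (Finset.Icc 1 r) (r - k) y := by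
  classical
  have hmin : min q r = q := min_eq_left hqr
  rw [hmin]
  have hAS : Finset.Icc 1 r ⊆ Finset.Icc 1 s := Finset.Icc_subset_Icc_right hrs
  have hcA : (Finset.Icc 1 r).card = r := by simp
  have hcS : (Finset.Icc 1 s).card = s := by simp
  generalize Finset.Icc 1 r = A at *
  generalize Finset.Icc 1 s = S at *
  have h1 : ∑ U ∈ S.powersetCard q, ∏ j ∈ U ∩ A, (1 + (y j)⁻¹)
      = ∑ T ∈ A.powerset, (((S.powersetCard q).filter (T ⊆ ·)).card : F) * ∏ j ∈ T, (y j)⁻¹ := by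
    simp_rw [Finset.prod_one_add, ← nsmul_eq_mul, ← Finset.sum_const]
    apply Finset.sum_comm'
    intro U T
    simp only [Finset.mem_powerset, Finset.mem_filter, Finset.subset_inter_iff]
    tauto
  rw [h1, Finset.sum_powerset, hcA, Finset.mul_sum]
  symm
  have hsub : Finset.range (q + 1) ⊆ Finset.range (r + 1) :=
    Finset.range_subset_range.2 (by omega)
  refine (Finset.sum_congr rfl ?_).trans (Finset.sum_subset hsub ?_)
  · intro k hk
    have hk' : k ≤ q := by simpa [Nat.lt_succ_iff] using hk
    rw [esymVal, Finset.mul_sum, Finset.mul_sum]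
    refine Finset.sum_nbij' (fun T => A \ T) (fun T => A \ T) ?_ ?_ ?_ ?_ ?_
    · intro T hT
      rw [Finset.mem_powersetCard] at hT ⊢
      refine ⟨Finset.sdiff_subset, ?_⟩
      rw [Finset.card_sdiff_of_subset hT.1]
      omega
    · intro T hT
      rw [Finset.mem_powersetCard] at hT ⊢
      refine ⟨Finset.sdiff_subset, ?_⟩
      rw [Finset.card_sdiff_of_subset hT.1]
      omega
    · intro T hT
      exact Finset.sdiff_sdiff_eq_self (Finset.mem_powersetCard.1 hT).1
    · intro T hT
      exact Finset.sdiff_sdiff_eq_self (Finset.mem_powersetCard.1 hT).1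
    · intro T hT
      rw [Finset.mem_powersetCard] at hT
      have hc : (A \ T).card = k := by
        rw [Finset.card_sdiff_of_subset hT.1]
        omega
      rw [Finset.card_filter_powersetCard_subset _ _ _ (Finset.sdiff_subset.trans hAS)
        (by omega), hc, hcS, ← Finset.prod_sdiff hT.1, Finset.prod_inv_distrib]
      have hne : ∏ j ∈ A \ T, y j ≠ 0 :=
        Finset.prod_ne_zero_iff.2 fun i hi => hy i (Finset.sdiff_subset hi)
      field_simp
  · intro k _ hk
    have hk' : q < k := by simpa [Nat.lt_succ_iff] using hk
    rw [Finset.sum_eq_zero, mul_zero]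
    intro T hT
    have : (S.powersetCard q).filter (T ⊆ ·) = ∅ := by
      apply Finset.filter_eq_empty_iff.2
      intro U hU hTU
      have := Finset.card_le_card hTU
      rw [(Finset.mem_powersetCard.1 hU).2, (Finset.mem_powersetCard.1 hT).2] at this
      omega
    rw [this]
    simp

end
end

section
/- Let m := p−b−1 ≥ 1, let S ⊆ {1,…,b+m} with #S = m, and let 2 ≤ ℓ ≤ b+m+1 = p. Then ρ(g·φ_{S,∅}) = ( ∏_{i ∈ {1,…,ℓ}∖S} (n_i − 1)/n_i ) · ξ_S. -/
open Finset MvPolynomial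

noncomputable section

variable {p : ℕ}

/-- The `(b+1)`-tuple of variable indices with block labels the elements of `J` in increasing
order, and coordinate inside block `j` chosen by `c`. -/
def tupleOf (n : Fin p → ℕ) {b : ℕ} (J : Finset (Fin p)) (hJ : J.card = b + 1)
    (c : ∀ j : ↥J, Fin (n j.1)) : Fin (b + 1) → Fin (∑ t, n t) :=
  fun r => emb n (J.orderIsoOfFin hJ r).1 (c (J.orderIsoOfFin hJ r))

/-- The invariant polynomial `ξ_S`, where `J` is the complement of `S` (with `p` adjoined):
the sum of `Δ(x)` over all tuples with block labels `J` in increasing order. -/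
def xiS (n : Fin p → ℕ) {b : ℕ} (J : Finset (Fin p)) (hJ : J.card = b + 1) :
    MvPolynomial (Fin (∑ t, n t)) ℚ :=
  ∑ c : (∀ j : ↥J, Fin (n j.1)), Delta (tupleOf n J hJ c)

/-- The partial sum `φ_{S,E}` of `ξ_S`: only tuples whose coordinate in block `j` is the first
one for `j ∈ E`, and is not the first one for `j ∉ E` with `j` among the first `ℓ` blocks. -/
def phiSE (n : Fin p → ℕ) {b : ℕ} (ℓ : ℕ) (J E : Finset (Fin p)) (hJ : J.card = b + 1) :
    MvPolynomial (Fin (∑ t, n t)) ℚ :=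
  ∑ c ∈ Finset.univ.filter (fun c : ∀ j : ↥J, Fin (n j.1) =>
      ∀ j : ↥J, (j.1 ∈ E → (c j : ℕ) = 0) ∧ ((j.1 : ℕ) < ℓ → j.1 ∉ E → (c j : ℕ) ≠ 0)),
    Delta (tupleOf n J hJ c)

theorem emb_lt_of_lt (n : Fin p → ℕ) (j j' : Fin p) (i : Fin (n j)) (i' : Fin (n j'))
    (h : j < j') : emb n j i < emb n j' i' := by
  have hj : j ∉ Finset.univ.filter (fun t => t < j) := by simp
  have h2 : ∑ t ∈ insert j (Finset.univ.filter (fun t => t < j)), n t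
      ≤ ∑ t ∈ Finset.univ.filter (fun t => t < j'), n t := by
    apply Finset.sum_le_sum_of_subset
    intro t ht
    simp only [Finset.mem_insert, Finset.mem_filter, Finset.mem_univ, true_and] at ht ⊢
    rcases ht with rfl | ht
    · exact h
    · exact ht.trans h
  rw [Finset.sum_insert hj] at h2
  have := i.isLt
  rw [Fin.lt_def]
  simp only [emb]
  omega

theorem emb_block (n : Fin p → ℕ) (j j' : Fin p) (i : Fin (n j)) (i' : Fin (n j'))
    (h : emb n j i = emb n j' i') : j = j' := by
  rcases lt_trichotomy j j' with h1 | h1 | h1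
  · exact absurd h (emb_lt_of_lt n j j' i i' h1).ne
  · exact h1
  · exact absurd h (emb_lt_of_lt n j' j i' i h1).ne'

theorem emb_inj (n : Fin p → ℕ) (j : Fin p) : Function.Injective (emb n j) := by
  intro a b h
  simp only [emb, Fin.ext_iff] at h
  ext
  omega

def embEquiv (n : Fin p → ℕ) : (Σ j : Fin p, Fin (n j)) ≃ Fin (∑ t, n t) :=
  Equiv.ofBijective (fun x => emb n x.1 x.2) (by
    rw [Fintype.bijective_iff_injective_and_card]
    refine ⟨?_, by simp⟩
    rintro ⟨j, i⟩ ⟨j', i'⟩ h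
    obtain rfl := emb_block n j j' i i' h
    obtain rfl := emb_inj n j h
    rfl)

theorem embEquiv_symm (n : Fin p → ℕ) (j : Fin p) (i : Fin (n j)) :
    (embEquiv n).symm (emb n j i) = ⟨j, i⟩ := by
  rw [Equiv.symm_apply_eq]; rfl

theorem permAct_Delta {N b : ℕ} (w : Equiv.Perm (Fin N)) (t : Fin (b + 1) → Fin N) :
    permAct w (Delta t) = Delta (fun r => w (t r)) := by
  simp [permAct, Delta, map_prod]

theorem permAct_mul {σ : Type*} (h w : Equiv.Perm σ) (f : MvPolynomial σ ℚ) :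
    permAct h (permAct w f) = permAct (h * w) f := by
  simp [permAct, MvPolynomial.rename_rename]

theorem young_mul (n : Fin p → ℕ) {h w : Equiv.Perm (Fin (∑ t, n t))}
    (hh : h ∈ youngGroup n) (hw : w ∈ youngGroup n) : h * w ∈ youngGroup n := by
  simp only [youngGroup, Finset.mem_filter, Finset.mem_univ, true_and] at *
  intro j i
  obtain ⟨i', hi'⟩ := hw j i
  obtain ⟨i'', hi''⟩ := hh j i'
  exact ⟨i'', by rw [Equiv.Perm.mul_apply, hi', hi'']⟩

theorem young_card_pos (n : Fin p → ℕ) : 0 < (youngGroup n).card := by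
  apply Finset.card_pos.mpr
  refine ⟨1, ?_⟩
  simp only [youngGroup, Finset.mem_filter, Finset.mem_univ, true_and]
  exact fun j i => ⟨i, rfl⟩

theorem rho_permAct (n : Fin p → ℕ) (w : Equiv.Perm (Fin (∑ t, n t)))
    (hw : w ∈ youngGroup n) (hw2 : w * w = 1) (f : MvPolynomial (Fin (∑ t, n t)) ℚ) :
    rho n (permAct w f) = rho n f := by
  simp only [rho, LinearMap.smul_apply, LinearMap.sum_apply, permAct_mul]
  congr 1
  refine Finset.sum_equiv (Equiv.mulRight w) ?_ ?_
  · intro h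
    simp only [Equiv.coe_mulRight]
    refine ⟨fun hh => young_mul n hh hw, fun hh => ?_⟩
    have := young_mul n hh hw
    rwa [mul_assoc, hw2, mul_one] at this
  · intro h _
    rfl

theorem rho_of_invariant (n : Fin p → ℕ) (f : MvPolynomial (Fin (∑ t, n t)) ℚ)
    (hf : ∀ h ∈ youngGroup n, permAct h f = f) : rho n f = f := by
  simp only [rho, LinearMap.smul_apply, LinearMap.sum_apply]
  rw [Finset.sum_congr rfl hf, Finset.sum_const, ← Nat.cast_smul_eq_nsmul ℚ, smul_smul,
    inv_mul_cancel₀, one_smul]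
  exact_mod_cast (young_card_pos n).ne'

theorem xiS_invariant (n : Fin p → ℕ) {b : ℕ} (J : Finset (Fin p)) (hJ : J.card = b + 1)
    (h : Equiv.Perm (Fin (∑ t, n t))) (hh : h ∈ youngGroup n) :
    permAct h (xiS n J hJ) = xiS n J hJ := by
  simp only [youngGroup, Finset.mem_filter, Finset.mem_univ, true_and] at hh
  choose s hs using hh
  have hinj : ∀ j, Function.Bijective (s j) := by
    intro j
    apply Function.Injective.bijective_of_finite
    intro a b hab
    apply emb_inj n j
    apply h.injective
    rw [hs, hs, hab]
  simp only [xiS, map_sum, permAct_Delta]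
  refine Fintype.sum_equiv
    (Equiv.piCongrRight fun j : ↥J => Equiv.ofBijective (s j.1) (hinj j.1)) _ _ ?_
  intro c
  congr 1
  funext r
  simp only [tupleOf, hs]
  rfl

theorem rho_Delta_eq (n : Fin p → ℕ) {b : ℕ} (J : Finset (Fin p)) (hJ : J.card = b + 1)
    (c c' : ∀ j : ↥J, Fin (n j.1)) :
    rho n (Delta (tupleOf n J hJ c)) = rho n (Delta (tupleOf n J hJ c')) := by
  classical
  let s : ∀ j : Fin p, Equiv.Perm (Fin (n j)) := fun j =>
    if hj : j ∈ J then Equiv.swap (c ⟨j, hj⟩) (c' ⟨j, hj⟩) else 1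
  have hss : ∀ j i, s j (s j i) = i := by
    intro j i
    by_cases hj : j ∈ J <;> simp [s, hj]
  let w : Equiv.Perm (Fin (∑ t, n t)) :=
    ((embEquiv n).symm.trans (Equiv.sigmaCongrRight s)).trans (embEquiv n)
  have hw : ∀ j i, w (emb n j i) = emb n j (s j i) := by
    intro j i
    simp only [w, Equiv.trans_apply, embEquiv_symm]
    rfl
  have hwG : w ∈ youngGroup n := by
    simp only [youngGroup, Finset.mem_filter, Finset.mem_univ, true_and]
    exact fun j i => ⟨s j i, hw j i⟩
  have hw2 : w * w = 1 := by
    ext a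
    obtain ⟨⟨j, i⟩, rfl⟩ := (embEquiv n).surjective a
    change ((w (w (emb n j i)) : Fin _) : ℕ) = (emb n j i : ℕ)
    rw [hw, hw, hss]
  rw [← rho_permAct n w hwG hw2 (Delta (tupleOf n J hJ c)), permAct_Delta]
  congr 2
  funext r
  simp only [tupleOf, hw]
  congr 1
  have hj : (J.orderIsoOfFin hJ r).1 ∈ J := (J.orderIsoOfFin hJ r).2
  simp only [s, dif_pos hj]
  exact Equiv.swap_apply_left _ _

theorem xiS_eq (n : Fin p → ℕ) {b : ℕ} (J : Finset (Fin p)) (hJ : J.card = b + 1)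
    (c : ∀ j : ↥J, Fin (n j.1)) :
    xiS n J hJ = (∏ j ∈ J, (n j : ℚ)) • rho n (Delta (tupleOf n J hJ c)) := by
  rw [← rho_of_invariant n _ (xiS_invariant n J hJ)]
  simp only [xiS, map_sum]
  rw [Finset.sum_congr rfl (fun c' _ => rho_Delta_eq n J hJ c' c), Finset.sum_const,
    ← Nat.cast_smul_eq_nsmul ℚ]
  congr 1
  rw [Finset.card_univ, Fintype.card_pi]
  simp only [Fintype.card_fin, Nat.cast_prod]
  exact Finset.prod_coe_sort J (fun j => (n j : ℚ))

theorem card_filter_phi (n : Fin p → ℕ) (hn : ∀ j, 0 < n j) (ℓ : ℕ) (J : Finset (Fin p)) :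
    ((Finset.univ.filter (fun c : ∀ j : ↥J, Fin (n j.1) =>
      ∀ j : ↥J, (j.1 ∈ (∅ : Finset (Fin p)) → (c j : ℕ) = 0) ∧
        ((j.1 : ℕ) < ℓ → j.1 ∉ (∅ : Finset (Fin p)) → (c j : ℕ) ≠ 0))).card : ℚ)
      = ∏ j ∈ J, (if (j : ℕ) < ℓ then (n j : ℚ) - 1 else n j) := by
  have h1 : (Finset.univ.filter (fun c : ∀ j : ↥J, Fin (n j.1) =>
      ∀ j : ↥J, (j.1 ∈ (∅ : Finset (Fin p)) → (c j : ℕ) = 0) ∧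
        ((j.1 : ℕ) < ℓ → j.1 ∉ (∅ : Finset (Fin p)) → (c j : ℕ) ≠ 0)))
      = Fintype.piFinset (fun j : ↥J =>
          if (j.1 : ℕ) < ℓ then Finset.univ.erase (⟨0, hn j.1⟩ : Fin (n j.1))
          else Finset.univ) := by
    ext c
    simp only [Finset.mem_filter, Finset.mem_univ, true_and, Fintype.mem_piFinset]
    refine forall_congr' fun j => ?_
    by_cases hj : (j.1 : ℕ) < ℓ <;> simp [hj, Fin.ext_iff]
  rw [h1, Fintype.card_piFinset, Nat.cast_prod,
    ← Finset.prod_coe_sort J (fun j => if (j : ℕ) < ℓ then (n j : ℚ) - 1 else n j)]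
  refine Finset.prod_congr rfl fun j _ => ?_
  by_cases hj : (j.1 : ℕ) < ℓ
  · simp only [hj, if_true]
    rw [Finset.card_erase_of_mem (Finset.mem_univ _), Finset.card_univ, Fintype.card_fin,
      Nat.cast_sub (hn j.1), Nat.cast_one]
  · simp [hj]

/-- Proposition 5.7: for `m ≥ 1`, `S ⊆ {1,…,b+m}` with `#S = m`, and `2 ≤ ℓ ≤ p`,
`ρ(g·φ_{S,∅}) = (∏_{i ∈ {1,…,ℓ}∖S} (n_i-1)/n_i) · ξ_S`. -/
theorem rho_g_phi_S_empty (p b ℓ : ℕ) (n : Fin p → ℕ) (hn : ∀ j, 0 < n j)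
    (hm : b + 2 ≤ p) (hℓ2 : 2 ≤ ℓ) (hℓp : ℓ ≤ p)
    (g : Equiv.Perm (Fin (∑ t, n t)))
    (hg1 : ∀ j k : Fin p, (k : ℕ) = (j : ℕ) + 1 → (k : ℕ) < ℓ →
      g (emb n j ⟨0, hn j⟩) = emb n k ⟨0, hn k⟩)
    (hg2 : ∀ j j' : Fin p, (j : ℕ) = ℓ - 1 → (j' : ℕ) = 0 →
      g (emb n j ⟨0, hn j⟩) = emb n j' ⟨0, hn j'⟩)
    (hg3 : ∀ a, (∀ j : Fin p, (j : ℕ) < ℓ → a ≠ emb n j ⟨0, hn j⟩) → g a = a)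
    (S : Finset (Fin p)) (hS : ∀ j ∈ S, (j : ℕ) < p - 1)
    (hScard : S.card = p - b - 1) (hJ : Sᶜ.card = b + 1) :
    rho n (permAct g (phiSE n ℓ Sᶜ ∅ hJ))
      = (∏ i ∈ firstL p ℓ \ S, ((n i : ℚ) - 1) / (n i : ℚ)) • xiS n Sᶜ hJ := by
  have hfix : permAct g (phiSE n ℓ Sᶜ ∅ hJ) = phiSE n ℓ Sᶜ ∅ hJ := by
    simp only [phiSE, map_sum, permAct_Delta]
    refine Finset.sum_congr rfl fun c hc => ?_
    congr 1
    funext r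
    apply hg3
    intro j hj heq
    simp only [tupleOf] at heq
    have hb := emb_block n _ _ _ _ heq
    subst hb
    have hi := emb_inj n _ heq
    have := ((Finset.mem_filter.mp hc).2 ((Sᶜ).orderIsoOfFin hJ r)).2 hj (by simp)
    rw [hi] at this
    exact this rfl
  rw [hfix]
  let c₀ : ∀ j : ↥(Sᶜ), Fin (n j.1) := fun j => ⟨0, hn j.1⟩
  rw [xiS_eq n Sᶜ hJ c₀, smul_smul]
  simp only [phiSE, map_sum]
  rw [Finset.sum_congr rfl (fun c' _ => rho_Delta_eq n Sᶜ hJ c' c₀), Finset.sum_const,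
    ← Nat.cast_smul_eq_nsmul ℚ, card_filter_phi n hn]
  congr 1
  have hset : firstL p ℓ \ S = (Sᶜ).filter (fun j : Fin p => (j : ℕ) < ℓ) := by
    ext j
    simp [firstL, and_comm]
  rw [hset, Finset.prod_filter, ← Finset.prod_mul_distrib]
  refine Finset.prod_congr rfl fun j _ => ?_
  have : (n j : ℚ) ≠ 0 := by exact_mod_cast (hn j).ne'
  split_ifs
  · field_simp
  · simp

end
end

section
/- Let b ≥ 0, m ≥ 1, let 2 ≤ ℓ ≤ b+m, and let n_1,…,n_ℓ be positive integers. Then Σ_{S ⊆ {1,…,b+m}, #S = m} ∏_{i ∈ {1,…,ℓ}∖S} (n_i − 1)/n_i = (1/(n_1⋯n_ℓ)) · Σ_{k=0}^{min(m,ℓ)} ((b+1)_{m−k}/(m−k)!) · e_{ℓ−k}(n_1−1,…,n_ℓ−1). -/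
noncomputable section

lemma aux_expand (L S : Finset ℕ) (x : ℕ → ℚ) :
    ∏ i ∈ L, (if i ∈ S then x i + 1 else x i)
      = ∑ T ∈ L.powerset, (if T ⊆ S then 1 else 0) * ∏ i ∈ L \ T, x i := by
  have h : ∀ i ∈ L, (if i ∈ S then x i + 1 else x i) = (if i ∈ S then (1:ℚ) else 0) + x i := by
    intro i _
    split_ifs <;> ring
  rw [Finset.prod_congr rfl h, Finset.prod_add]
  refine Finset.sum_congr rfl fun T _ => ?_
  rw [Finset.prod_boole]
  rfl

lemma aux_count (U T : Finset ℕ) (m : ℕ) (hT : T ⊆ U) (hm : T.card ≤ m) :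
    ((U.powersetCard m).filter (fun S => T ⊆ S)).card
      = (U.card - T.card).choose (m - T.card) := by
  rw [← Finset.card_sdiff_of_subset hT, ← Finset.card_powersetCard]
  refine Finset.card_bij' (fun S _ => S \ T) (fun R _ => R ∪ T) ?_ ?_ ?_ ?_
  · intro S hS
    simp only [Finset.mem_filter, Finset.mem_powersetCard] at hS ⊢
    refine ⟨Finset.sdiff_subset_sdiff hS.1.1 le_rfl, ?_⟩
    rw [Finset.card_sdiff_of_subset hS.2, hS.1.2]
  · intro R hR
    simp only [Finset.mem_filter, Finset.mem_powersetCard] at hR ⊢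
    have hd : Disjoint R T := Finset.disjoint_of_subset_left hR.1 Finset.sdiff_disjoint
    refine ⟨⟨Finset.union_subset (hR.1.trans Finset.sdiff_subset) hT, ?_⟩,
      Finset.subset_union_right⟩
    rw [Finset.card_union_of_disjoint hd, hR.2]
    omega
  · intro S hS
    simp only [Finset.mem_filter] at hS
    exact Finset.sdiff_union_of_subset hS.2
  · intro R hR
    simp only [Finset.mem_powersetCard] at hR
    have hd : Disjoint R T := Finset.disjoint_of_subset_left hR.1 Finset.sdiff_disjoint
    exact Finset.union_sdiff_cancel_right hd

lemma aux_esym (L : Finset ℕ) (k : ℕ) (hk : k ≤ L.card) (x : ℕ → ℚ) :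
    ∑ T ∈ L.powersetCard k, ∏ i ∈ L \ T, x i = esymVal L (L.card - k) x := by
  unfold esymVal
  refine Finset.sum_bij' (fun T _ => L \ T) (fun T _ => L \ T) ?_ ?_ ?_ ?_ ?_
  · intro T hT
    simp only [Finset.mem_powersetCard] at hT ⊢
    exact ⟨Finset.sdiff_subset, by rw [Finset.card_sdiff_of_subset hT.1, hT.2]⟩
  · intro T hT
    simp only [Finset.mem_powersetCard] at hT ⊢
    exact ⟨Finset.sdiff_subset, by rw [Finset.card_sdiff_of_subset hT.1, hT.2]; omega⟩
  · intro T hT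
    exact Finset.sdiff_sdiff_eq_self (Finset.mem_powersetCard.1 hT).1
  · intro T hT
    exact Finset.sdiff_sdiff_eq_self (Finset.mem_powersetCard.1 hT).1
  · intro T _
    rfl

lemma aux_poch (b j : ℕ) :
    poch ((b : ℚ) + 1) j / (Nat.factorial j) = ((b + j).choose j : ℚ) := by
  have h : poch ((b : ℚ) + 1) j = ((b + 1).ascFactorial j : ℚ) := by
    unfold poch
    rw [Nat.ascFactorial_eq_prod_range]
    push_cast
    rfl
  rw [h, Nat.ascFactorial_eq_factorial_mul_choose]
  push_cast
  have : (Nat.factorial j : ℚ) ≠ 0 := by exact_mod_cast Nat.factorial_ne_zero j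
  field_simp

/-- Proposition 5.8 (the summation over all `S`), for `2 ≤ ℓ ≤ b+m`. -/
theorem sum_over_S_eq (b m ℓ : ℕ) (hm : 1 ≤ m) (hℓ2 : 2 ≤ ℓ) (hℓ : ℓ ≤ b + m)
    (n : ℕ → ℕ) (hn : ∀ i ∈ Finset.Icc 1 ℓ, 0 < n i) :
    ∑ S ∈ (Finset.Icc 1 (b + m)).powersetCard m,
        ∏ i ∈ Finset.Icc 1 ℓ \ S, ((n i : ℚ) - 1) / (n i : ℚ)
      = (∏ i ∈ Finset.Icc 1 ℓ, (n i : ℚ))⁻¹ *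
          ∑ k ∈ Finset.range (min m ℓ + 1),
            poch ((b : ℚ) + 1) (m - k) / (Nat.factorial (m - k)) *
              esymVal (Finset.Icc 1 ℓ) (ℓ - k) (fun i => (n i : ℚ) - 1) := by
  have hU : (Finset.Icc 1 (b + m)).card = b + m := by simp
  have hL : (Finset.Icc 1 ℓ).card = ℓ := by simp
  have hLU : Finset.Icc 1 ℓ ⊆ Finset.Icc 1 (b + m) := Finset.Icc_subset_Icc le_rfl hℓ
  generalize Finset.Icc 1 (b + m) = U at *
  generalize Finset.Icc 1 ℓ = L at *
  have h1 : ∀ S ∈ U.powersetCard m, ∏ i ∈ L \ S, ((n i : ℚ) - 1) / (n i : ℚ)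
      = (∏ i ∈ L, (n i : ℚ))⁻¹ *
        ∑ T ∈ L.powerset, (if T ⊆ S then 1 else 0) * ∏ i ∈ L \ T, ((n i : ℚ) - 1) := by
    intro S _
    rw [← aux_expand L S (fun i => (n i : ℚ) - 1), ← Finset.prod_inv_distrib,
      ← Finset.prod_mul_distrib, Finset.sdiff_eq_filter, Finset.prod_filter]
    refine Finset.prod_congr rfl fun i hi => ?_
    have : (n i : ℚ) ≠ 0 := by exact_mod_cast (hn i hi).ne'
    by_cases hS : i ∈ S
    · simp [hS, this]
    · simp [hS, div_eq_inv_mul]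
  rw [Finset.sum_congr rfl h1, ← Finset.mul_sum, Finset.sum_comm]
  congr 1
  rw [Finset.sum_powerset, hL]
  symm
  refine Finset.sum_subset_zero_on_sdiff (by intro k; simp only [Finset.mem_range]; omega) ?_ ?_
  · intro k hk
    simp only [Finset.mem_sdiff, Finset.mem_range] at hk
    refine Finset.sum_eq_zero fun T hT => Finset.sum_eq_zero fun S hS => ?_
    rw [Finset.mem_powersetCard] at hT hS
    rw [if_neg, zero_mul]
    intro h
    have := Finset.card_le_card h
    omega
  · intro k hk
    simp only [Finset.mem_range] at hk
    have hk1 : k ≤ m := by omega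
    have hk2 : k ≤ L.card := by omega
    rw [aux_poch]
    conv_lhs => rw [← hL]
    rw [← aux_esym L k hk2, Finset.mul_sum]
    refine Finset.sum_congr rfl fun T hT => ?_
    rw [Finset.mem_powersetCard] at hT
    rw [← Finset.sum_mul, Finset.sum_boole,
      aux_count U T m (hT.1.trans hLU) (by omega), hU, hT.2,
      show b + m - k = b + (m - k) by omega]

end
end
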